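/- arXiv:1806.09578 — 4 statements merged into one kernel-verified Lean document; each statement's English description precedes it below -/
import Mathlib

section
/- Let H be a real Hilbert space, let K ⊆ H be compact, and let δ > 0. Then there exists a function φ : H → ℝ of class C^∞ (infinitely Fréchet differentiable) with values in [0,1] such that φ(x) = 1 for all x with dist(x, K) ≤ δ, φ(x) = 0 for all x with dist(x, K) > 2δ, and moreover for every n ∈ ℕ the n-th iterated Fréchet derivative of φ is bounded on H. -/
/-!
The squared norm is a polynomial, so `x ↦ b (‖x - k‖ ^ 2)` is smooth of temperate growth for every
bump function `b` on `ℝ`. Cover the totally bounded set `K` by finitely many small balls: the sum of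
such radial bumps over the centers `k` is at least `1` near `K` and vanishes away from `K`, and
composing it with a smooth step on `ℝ` gives the cut-off. Since `K` is bounded, so is the support of
the cut-off, and on a bounded set temperate growth bounds every derivative.
-/

open Bornology Metric Set

theorem exists_norm_iteratedFDeriv_le_of_isBounded_support {E F : Type*} [NormedAddCommGroup E]
    [NormedSpace ℝ E] [NormedAddCommGroup F] [NormedSpace ℝ F] {f : E → F}
    (hf : f.HasTemperateGrowth) (hsupp : IsBounded (Function.support f)) (n : ℕ) :
    ∃ C : ℝ, ∀ x, ‖iteratedFDeriv ℝ n f x‖ ≤ C := by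
  obtain ⟨k, C, hC⟩ := hf.2 n
  obtain ⟨R, hR⟩ := hsupp.closure.exists_norm_le
  refine ⟨|C| * (1 + |R|) ^ k, fun x ↦ ?_⟩
  by_cases hx : x ∈ tsupport f
  · calc
      ‖iteratedFDeriv ℝ n f x‖ ≤ C * (1 + ‖x‖) ^ k := hC x
      _ ≤ |C| * (1 + |R|) ^ k := by
        gcongr
        exacts [le_abs_self C, (hR x hx).trans (le_abs_self R)]
  · rw [Function.notMem_support.mp fun h ↦ hx (support_iteratedFDeriv_subset n h), norm_zero]
    positivity

section InnerProductSpace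

variable {H : Type*} [NormedAddCommGroup H] [InnerProductSpace ℝ H]

theorem exists_hasTemperateGrowth_cutoff_ball (c : H) {r R : ℝ} (hr : 0 < r) (hrR : r < R) :
    ∃ ψ : H → ℝ, ψ.HasTemperateGrowth ∧ (∀ x, 0 ≤ ψ x) ∧ EqOn ψ 1 (ball c r) ∧
      Function.support ψ ⊆ ball c R := by
  let b : ContDiffBump (0 : ℝ) := ⟨r ^ 2, R ^ 2, by positivity, by gcongr⟩
  have hb : Function.HasTemperateGrowth b := b.hasCompactSupport.hasTemperateGrowth b.contDiff
  have hsq : Function.HasTemperateGrowth fun x : H ↦ ‖x - c‖ ^ 2 :=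
    (Function.hasTemperateGrowth_norm_sq H).comp (f := fun x ↦ x - c) (by fun_prop)
  refine ⟨fun x ↦ b (‖x - c‖ ^ 2), hb.comp hsq, fun x ↦ b.nonneg, fun x hx ↦ ?_, fun x hx ↦ ?_⟩
  · apply b.one_of_mem_closedBall
    rw [mem_ball_iff_norm] at hx
    simpa [b] using pow_le_pow_left₀ (norm_nonneg _) hx.le 2
  · have hx' : ‖x - c‖ ^ 2 ∈ Function.support b := hx
    rw [b.support_eq] at hx'
    have : ‖x - c‖ ^ 2 < R ^ 2 := by simpa [b] using hx'
    exact mem_ball_iff_norm.mpr (lt_of_pow_lt_pow_left₀ 2 (hr.trans hrR).le this)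

theorem exists_hasTemperateGrowth_cutoff_thickening_of_finite {s : Set H} (hs : s.Finite)
    {r R : ℝ} (hr : 0 < r) (hrR : r < R) :
    ∃ φ : H → ℝ, φ.HasTemperateGrowth ∧ (∀ x, φ x ∈ Icc 0 1) ∧ EqOn φ 1 (thickening r s) ∧
      Function.support φ ⊆ thickening R s := by
  choose ψ hψ hψ0 hψ1 hψs using fun k : H ↦ exists_hasTemperateGrowth_cutoff_ball k hr hrR
  let b : ContDiffBump (0 : ℝ) := ⟨1 / 2, 1, by norm_num, by norm_num⟩
  have hb : Function.HasTemperateGrowth b := b.hasCompactSupport.hasTemperateGrowth b.contDiff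
  have hsum : Function.HasTemperateGrowth fun x ↦ ∑ k ∈ hs.toFinset, ψ k x := .sum fun k _ ↦ hψ k
  refine ⟨fun x ↦ 1 - b (∑ k ∈ hs.toFinset, ψ k x), .fun_sub (.const 1) (hb.comp hsum),
    fun x ↦ ⟨sub_nonneg.mpr b.le_one, sub_le_self 1 b.nonneg⟩, fun x hx ↦ ?_, fun x hx ↦ ?_⟩
  · obtain ⟨k, hk, hxk⟩ := mem_thickening_iff.mp hx
    have hle : 1 ≤ ∑ k ∈ hs.toFinset, ψ k x := calc
      1 = ψ k x := (hψ1 k hxk).symm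
      _ ≤ ∑ k ∈ hs.toFinset, ψ k x :=
        Finset.single_le_sum (f := fun k ↦ ψ k x) (fun k _ ↦ hψ0 k x) (hs.mem_toFinset.mpr hk)
    have : b (∑ k ∈ hs.toFinset, ψ k x) = 0 := b.zero_of_le_dist <| by
      simpa [b] using hle.trans (le_abs_self _)
    simp [this]
  · contrapose! hx
    have hzero : ∑ k ∈ hs.toFinset, ψ k x = 0 := Finset.sum_eq_zero fun k hk ↦
      Function.notMem_support.mp fun h ↦
        hx (mem_thickening_iff.mpr ⟨k, hs.mem_toFinset.mp hk, hψs k h⟩)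
    simp [hzero, b.eventuallyEq_one.eq_of_nhds]

theorem exists_hasTemperateGrowth_cutoff_thickening_of_totallyBounded {K : Set H}
    (hK : TotallyBounded K) {r R : ℝ} (hr : 0 < r) (hrR : r < R) :
    ∃ φ : H → ℝ, φ.HasTemperateGrowth ∧ (∀ x, φ x ∈ Icc 0 1) ∧ EqOn φ 1 (thickening r K) ∧
      Function.support φ ⊆ thickening R K := by
  obtain ⟨ε, hε, hεR⟩ : ∃ ε > 0, r + ε < R := ⟨(R - r) / 2, by linarith, by linarith⟩
  obtain ⟨s, hsK, hs, hcover⟩ := finite_approx_of_totallyBounded hK ε hε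
  rw [← thickening_eq_biUnion_ball] at hcover
  obtain ⟨φ, hφ, hφI, hφ1, hφs⟩ :=
    exists_hasTemperateGrowth_cutoff_thickening_of_finite hs (add_pos hr hε) hεR
  have hrK : thickening r K ⊆ thickening (r + ε) s :=
    (thickening_subset_of_subset r hcover).trans (thickening_thickening_subset r ε s)
  exact ⟨φ, hφ, hφI, hφ1.mono hrK, hφs.trans (thickening_subset_of_subset R hsK)⟩

theorem exists_smooth_cutoff_of_isCompact_general {K : Set H} (hK : TotallyBounded K) {r R : ℝ}
    (hr : 0 ≤ r) (hrR : r < R) :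
    ∃ φ : H → ℝ, ContDiff ℝ (⊤ : ℕ∞) φ ∧ (∀ x, φ x ∈ Icc (0 : ℝ) 1) ∧
      (∀ x, infDist x K ≤ r → φ x = 1) ∧ (∀ x, R < infDist x K → φ x = 0) ∧
      (∀ n : ℕ, ∃ C : ℝ, ∀ x, ‖iteratedFDeriv ℝ n φ x‖ ≤ C) := by
  rcases K.eq_empty_or_nonempty with rfl | hne
  · -- `infDist x ∅ = 0`, so the cut-off must be `1` everywhere.
    refine ⟨fun _ ↦ 1, contDiff_const, by simp, by simp, fun x hx ↦ ?_, fun n ↦ ⟨1, fun x ↦ ?_⟩⟩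
    · linarith [infDist_empty (x := x)]
    · rcases eq_or_ne n 0 with rfl | hn
      · simp
      · simp [iteratedFDeriv_const_of_ne hn]
  obtain ⟨ρ, hrρ, hρR⟩ := exists_between hrR
  obtain ⟨φ, hφ, hφI, hφ1, hφs⟩ :=
    exists_hasTemperateGrowth_cutoff_thickening_of_totallyBounded hK (hr.trans_lt hrρ) hρR
  refine ⟨φ, hφ.1, hφI, fun x hx ↦ hφ1 ?_, fun x hx ↦ Function.notMem_support.mp fun h ↦ ?_,
    exists_norm_iteratedFDeriv_le_of_isBounded_support hφ (hK.isBounded.thickening.subset hφs)⟩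
  · exact (mem_thickening_iff_infDist_lt hne).mpr (hx.trans_lt hrρ)
  · exact hx.not_gt ((mem_thickening_iff_infDist_lt hne).mp (hφs h))

end InnerProductSpace

/-- Smooth cut-off around a compact subset of a Hilbert space: there is a `C^∞` function
`φ : H → [0,1]` equal to `1` on the closed `δ`-neighbourhood of `K`, vanishing outside the
closed `2δ`-neighbourhood of `K`, all of whose iterated derivatives are bounded. -/
theorem exists_smooth_cutoff_of_isCompact
    {H : Type*} [NormedAddCommGroup H] [InnerProductSpace ℝ H] [CompleteSpace H]
    (K : Set H) (hK : IsCompact K) (δ : ℝ) (hδ : 0 < δ) :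
    ∃ φ : H → ℝ, ContDiff ℝ (⊤ : ℕ∞) φ ∧ (∀ x, φ x ∈ Set.Icc (0:ℝ) 1) ∧
      (∀ x, Metric.infDist x K ≤ δ → φ x = 1) ∧
      (∀ x, 2 * δ < Metric.infDist x K → φ x = 0) ∧
      (∀ n : ℕ, ∃ C : ℝ, ∀ x, ‖iteratedFDeriv ℝ n φ x‖ ≤ C) :=
  exists_smooth_cutoff_of_isCompact_general hK.totallyBounded hδ.le (by linarith)
end

section
/- Let d ∈ ℕ, let M be a second-countable Hausdorff C¹ manifold without boundary of dimension d (modelled on ℝ^d), let K ⊆ M be a closed set, and let H be a real Hilbert space containing a linear subspace of dimension d + 1. Let f : K → H be a continuous function such that 0 ∉ f(K). Then there exists a continuous function f̄ : M → H such that f̄(x) = f(x) for all x ∈ K and 0 ∉ f̄(M). -/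
/-!
By Dugundji's theorem `f` extends to a continuous map `F : M → H`, possibly with zeros off `K`.
Split off a subspace of `H` of dimension greater than that of `M`, with continuous projection `P`.
It suffices to replace the component `P ∘ F` by a map that agrees with it on `K` and has no zeros
off `K`: the new map equals `f ≠ 0` on `K`, and its projection is nonzero elsewhere.

The continuous maps agreeing with `P ∘ F` on `K` form a complete space for uniform convergence on
compact sets. Having no zeros on a given compact set `A` is an open condition there. If `A` lies in
a chart and misses `K`, it is also a dense one: read in the chart, approximate by a `C¹` map, whose
range has dense complement for dimension reasons, and translate it by a small vector outside this
range. As `M \ K` is a countable union of such sets `A`, Baire's theorem yields a map without zeros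
off `K`.
-/

open Filter Metric Module Set Topology TopologicalSpace

section Dugundji

variable {X E : Type*} [AddCommGroup E] [TopologicalSpace E] [Module ℝ E]

theorem exists_continuousOn_compl_mem_convexHull_image_ball [PseudoMetricSpace X]
    [ContinuousAdd E] [ContinuousSMul ℝ E] {K : Set X} (hK : IsClosed K) (hne : K.Nonempty)
    (f : X → E) {c : ℝ} (hc : 1 < c) :
    ∃ g : X → E, ContinuousOn g Kᶜ ∧ EqOn g f K ∧
      ∀ x ∉ K, g x ∈ convexHull ℝ (f '' (K ∩ ball x (c * infDist x K))) := by
  classical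
  have hlocal (x : ↥Kᶜ) : ∃ v : E, ∀ᶠ y : ↥Kᶜ in 𝓝 x,
      v ∈ convexHull ℝ (f '' (K ∩ ball (y : X) (c * infDist (y : X) K))) := by
    have hpos : 0 < infDist (x : X) K := (hK.notMem_iff_infDist_pos hne).1 x.2
    obtain ⟨a, haK, hxa⟩ := (infDist_lt_iff hne).1 (lt_mul_of_one_lt_left hpos hc)
    -- An almost nearest point of `x` is still almost nearest for all `y` close to `x`.
    have hcont : Continuous fun y : ↥Kᶜ ↦ c * infDist (y : X) K := by fun_prop
    refine ⟨f a, ?_⟩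
    filter_upwards [(continuous_subtype_val.dist continuous_const).continuousAt.eventually_lt
      hcont.continuousAt hxa] with y hy
    exact subset_convexHull ℝ _ (mem_image_of_mem f ⟨haK, mem_ball'.2 hy⟩)
  obtain ⟨g, hg⟩ := exists_continuous_forall_mem_convex_of_local_const
    (fun _ ↦ convex_convexHull ℝ _) hlocal
  refine ⟨fun x ↦ if hx : x ∈ K then f x else g ⟨x, hx⟩, ?_, fun x hx ↦ dif_pos hx,
    fun x hx ↦ by simpa only [dif_neg hx] using hg ⟨x, hx⟩⟩
  rw [continuousOn_iff_continuous_domRestrict]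
  convert g.continuous using 1
  ext x
  exact dif_neg x.2

theorem continuous_of_mem_convexHull_image_ball [PseudoMetricSpace X] [LocallyConvexSpace ℝ E]
    {K : Set X} (hK : IsClosed K) {f g : X → E} (hf : ContinuousOn f K)
    (hg : ContinuousOn g Kᶜ) (hgf : EqOn g f K) {c : ℝ} (hc : 0 ≤ c)
    (hball : ∀ x ∉ K, g x ∈ convexHull ℝ (f '' (K ∩ ball x (c * infDist x K)))) :
    Continuous g := by
  refine continuous_iff_continuousAt.2 fun a ↦ ?_
  by_cases! ha : a ∉ K
  · exact hg.continuousAt (hK.isOpen_compl.mem_nhds ha)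
  refine (LocallyConvexSpace.convex_basis (𝕜 := ℝ) (g a)).tendsto_right_iff.2
    fun U ⟨hU, hUconv⟩ ↦ ?_
  rw [hgf ha] at hU
  obtain ⟨δ, hδ, hfU⟩ := mem_nhdsWithin_iff.1 (hf a ha hU)
  filter_upwards [ball_mem_nhds a (show 0 < δ / (c + 1) by positivity)] with x hx
  have hxa : (c + 1) * dist x a < δ := (lt_div_iff₀' (by positivity)).1 hx
  by_cases hxK : x ∈ K
  · rw [hgf hxK]
    exact hfU ⟨mem_ball.2 (by nlinarith [dist_nonneg (x := x) (y := a)]), hxK⟩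
  refine convexHull_min ?_ hUconv (hball x hxK)
  rintro _ ⟨y, ⟨hyK, hy⟩, rfl⟩
  refine hfU ⟨?_, hyK⟩
  calc dist y a ≤ dist y x + dist x a := dist_triangle y x a
    _ < c * infDist x K + dist x a := by gcongr; exact hy
    _ ≤ c * dist x a + dist x a := by gcongr; exact infDist_le_dist_of_mem ha
    _ = (c + 1) * dist x a := by ring
    _ < δ := hxa

/-- **Dugundji's extension theorem**. -/
theorem exists_continuous_eqOn_forall_mem_convex [TopologicalSpace X] [PseudoMetrizableSpace X]
    [ContinuousAdd E] [ContinuousSMul ℝ E] [LocallyConvexSpace ℝ E] {K : Set X}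
    (hK : IsClosed K) {f : X → E} (hf : ContinuousOn f K) {s : Set E} (hs : Convex ℝ s)
    (hne : s.Nonempty) (hfs : MapsTo f K s) :
    ∃ g : X → E, Continuous g ∧ EqOn g f K ∧ ∀ x, g x ∈ s := by
  let := pseudoMetrizableSpacePseudoMetric X
  obtain rfl | hKne := K.eq_empty_or_nonempty
  · obtain ⟨c, hc⟩ := hne
    exact ⟨fun _ ↦ c, continuous_const, eqOn_empty _ _, fun _ ↦ hc⟩
  obtain ⟨g, hg, hgf, hball⟩ :=
    exists_continuousOn_compl_mem_convexHull_image_ball hK hKne f one_lt_two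
  refine ⟨g, continuous_of_mem_convexHull_image_ball hK hf hg hgf zero_le_two hball, hgf,
    fun x ↦ ?_⟩
  by_cases hx : x ∈ K
  · exact hgf hx ▸ hfs hx
  · exact convexHull_min ((image_mono inter_subset_left).trans hfs.image_subset) hs (hball x hx)

end Dugundji

theorem exists_continuousMap_eqOn_eqOn_dist_le {X V : Type*} [TopologicalSpace X]
    [PseudoMetrizableSpace X] [SeminormedAddCommGroup V] [NormedSpace ℝ V] {K A : Set X}
    (hK : IsClosed K) (hA : IsClosed A) (hKA : Disjoint K A) (g : C(X, V)) {ψ : X → V}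
    (hψ : ContinuousOn ψ A) {ε : ℝ} (hε : 0 ≤ ε) (hψg : ∀ x ∈ A, dist (ψ x) (g x) ≤ ε) :
    ∃ g' : C(X, V), EqOn g' g K ∧ EqOn g' ψ A ∧ ∀ x, dist (g' x) (g x) ≤ ε := by
  classical
  let u : X → V := A.indicator (ψ - g)
  have huA : EqOn u (ψ - g) A := fun x hx ↦ indicator_of_mem hx _
  have huK : EqOn u 0 K := fun x hx ↦ indicator_of_notMem (disjoint_left.1 hKA hx) _
  have hu : ContinuousOn u (K ∪ A) :=
    (continuousOn_const.congr huK).union_of_isClosed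
      ((hψ.sub g.continuous.continuousOn).congr huA) hK hA
  have hball : MapsTo u (K ∪ A) (closedBall 0 ε) := by
    rintro x (hx | hx)
    · simpa [huK hx] using hε
    · simpa [huA hx, dist_eq_norm] using hψg x hx
  obtain ⟨k, hk, hku, hkε⟩ := exists_continuous_eqOn_forall_mem_convex (hK.union hA) hu
    (convex_closedBall 0 ε) (nonempty_closedBall.2 hε) hball
  refine ⟨g + ⟨k, hk⟩, fun x hx ↦ ?_, fun x hx ↦ ?_, fun x ↦ ?_⟩
  · simp [hku (Or.inl hx), huK hx]
  · simp [hku (Or.inr hx), huA hx]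
  · simpa using hkε x

theorem mem_closure_of_forall_exists_dist_le {Y Z : Type*} [TopologicalSpace Y]
    [PseudoMetricSpace Z] {s : Set C(Y, Z)} {f : C(Y, Z)}
    (hs : ∀ ε > 0, ∃ g ∈ s, ∀ x, dist (g x) (f x) ≤ ε) :
    f ∈ closure s := by
  have : Nonempty C(Y, Z) := ⟨f⟩
  choose! u hus hu using hs
  have hlim : Tendsto u (𝓝[>] 0) (𝓝 f) := by
    refine ContinuousMap.tendsto_iff_forall_isCompact_tendstoUniformlyOn.2 fun L _ ↦
      Metric.tendstoUniformlyOn_iff.2 fun ε hε ↦ ?_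
    filter_upwards [Ioo_mem_nhdsGT hε] with δ hδ x _
    rw [dist_comm]
    exact (hu δ hδ.1 x).trans_lt hδ.2
  exact mem_closure_of_tendsto hlim (eventually_mem_nhdsWithin.mono hus)

theorem exists_countable_isCompact_cover_of_isOpen (E : Type*) {M : Type*} [TopologicalSpace E]
    [LocallyCompactSpace E] [TopologicalSpace M] [ChartedSpace E M] [SecondCountableTopology M]
    {U : Set M} (hU : IsOpen U) :
    ∃ 𝒜 : Set (Set M), 𝒜.Countable ∧ U ⊆ ⋃₀ 𝒜 ∧
      ∀ A ∈ 𝒜, IsCompact A ∧ A ⊆ U ∧ ∃ x, A ⊆ (chartAt E x).source := by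
  have : LocallyCompactSpace M := ChartedSpace.locallyCompactSpace E M
  have hlocal (x : M) (hx : x ∈ U) :
      ∃ A ∈ 𝓝 x, A ⊆ U ∩ (chartAt E x).source ∧ IsCompact A :=
    local_compact_nhds (inter_mem (hU.mem_nhds hx) (chart_source_mem_nhds E x))
  choose! A hAx hAU hA using hlocal
  obtain ⟨t, htU, ht, hcover⟩ := countable_cover_nhdsWithin
    fun x hx ↦ mem_nhdsWithin_of_mem_nhds (hAx x hx)
  refine ⟨A '' t, ht.image A, by rwa [sUnion_image], ?_⟩
  rintro _ ⟨x, hx, rfl⟩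
  have hsub := subset_inter_iff.1 (hAU x (htU hx))
  exact ⟨hA x (htU hx), hsub.1, x, hsub.2⟩

theorem hasLeftInverse_of_injective {V H : Type*} [AddCommGroup V] [TopologicalSpace V]
    [IsTopologicalAddGroup V] [Module ℝ V] [ContinuousSMul ℝ V] [FiniteDimensional ℝ V]
    [AddCommGroup H] [TopologicalSpace H] [IsTopologicalAddGroup H] [Module ℝ H]
    [ContinuousSMul ℝ H] [LocallyConvexSpace ℝ H] [T2Space H] {i : V →L[ℝ] H}
    (hi : Function.Injective i) : i.HasLeftInverse := by
  have : T2Space V := .of_injective_continuous hi i.continuous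
  obtain ⟨P, hP⟩ := Submodule.ClosedComplemented.of_finiteDimensional (𝕜 := ℝ) i.range
  let e := (LinearEquiv.ofInjective i.toLinearMap hi).toContinuousLinearEquiv
  refine ⟨e.symm.toContinuousLinearMap.comp P, fun v ↦ ?_⟩
  have : P (i v) = e v := hP (e v)
  simp [this]

section NonvanishingMaps

variable {E V X : Type*} [NormedAddCommGroup E] [NormedSpace ℝ E] [FiniteDimensional ℝ E]
  [NormedAddCommGroup V] [NormedSpace ℝ V] [FiniteDimensional ℝ V]

theorem exists_continuous_ne_zero_dist_lt {φ : E → V}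
    (hφ : Continuous φ) (hEV : finrank ℝ E < finrank ℝ V) {ε : ℝ} (hε : 0 < ε) :
    ∃ ψ : E → V, Continuous ψ ∧ (∀ x, ψ x ≠ 0) ∧ ∀ x, dist (ψ x) (φ x) < ε := by
  obtain ⟨ψ, hψ, hψφ, -⟩ := hφ.exists_contDiff_approx 1 (ε := fun _ ↦ ε / 2)
    continuous_const (fun _ ↦ half_pos hε)
  obtain ⟨v, hvψ, hvε⟩ := (hψ.dense_compl_range_of_finrank_lt_finrank hEV).exists_dist_lt 0
    (half_pos hε)
  refine ⟨fun x ↦ ψ x - v, hψ.continuous.sub continuous_const,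
    fun x hx ↦ hvψ ⟨x, sub_eq_zero.1 hx⟩, fun x ↦ ?_⟩
  calc dist (ψ x - v) (φ x) ≤ dist (ψ x - v) (ψ x) + dist (ψ x) (φ x) := dist_triangle _ _ _
    _ = dist 0 v + dist (ψ x) (φ x) := by simp
    _ < ε / 2 + ε / 2 := add_lt_add hvε (hψφ x)
    _ = ε := add_halves ε

theorem exists_continuousOn_ne_zero_dist_lt_of_subset_source [TopologicalSpace X]
    (e : OpenPartialHomeomorph X E) {A : Set X} (hA : IsCompact A) (hAe : A ⊆ e.source)
    {φ : X → V} (hφ : ContinuousOn φ A) (hEV : finrank ℝ E < finrank ℝ V) {ε : ℝ} (hε : 0 < ε) :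
    ∃ ψ : X → V, ContinuousOn ψ A ∧ (∀ x ∈ A, ψ x ≠ 0) ∧ ∀ x ∈ A, dist (ψ x) (φ x) < ε := by
  have he : ContinuousOn e A := e.continuousOn.mono hAe
  have hsymm : MapsTo e.symm (e '' A) A := by
    rintro _ ⟨x, hx, rfl⟩
    rwa [e.left_inv (hAe hx)]
  have hcont : ContinuousOn (φ ∘ e.symm) (e '' A) :=
    hφ.comp (e.continuousOn_symm.mono (e.mapsTo.mono_left hAe).image_subset) hsymm
  obtain ⟨φ', hφ', hφ'φ, -⟩ := exists_continuous_eqOn_forall_mem_convex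
    (hA.image_of_continuousOn he).isClosed hcont convex_univ univ_nonempty (mapsTo_univ _ _)
  obtain ⟨ψ, hψ, hψ0, hψφ'⟩ := exists_continuous_ne_zero_dist_lt hφ' hEV hε
  refine ⟨ψ ∘ e, hψ.comp_continuousOn he, fun x _ ↦ hψ0 (e x), fun x hx ↦ ?_⟩
  have hφ'x : φ' (e x) = φ x := by simpa [e.left_inv (hAe hx)] using hφ'φ (mem_image_of_mem e hx)
  exact hφ'x ▸ hψφ' (e x)

theorem dense_setOf_eqOn_ne_zero [TopologicalSpace X] [MetrizableSpace X] {K A : Set X}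
    (hK : IsClosed K) (hA : IsCompact A) (hKA : Disjoint K A) (e : OpenPartialHomeomorph X E)
    (hAe : A ⊆ e.source) (hEV : finrank ℝ E < finrank ℝ V) (F : X → V) :
    Dense {g : {g : C(X, V) | EqOn g F K} | MapsTo g.1 A {0}ᶜ} := by
  refine Subtype.dense_iff.2 fun g hg ↦ mem_closure_of_forall_exists_dist_le fun ε hε ↦ ?_
  obtain ⟨ψ, hψ, hψ0, hψg⟩ :=
    exists_continuousOn_ne_zero_dist_lt_of_subset_source e hA hAe g.continuous.continuousOn hEV hε
  obtain ⟨g', hg'g, hg'ψ, hg'ε⟩ := exists_continuousMap_eqOn_eqOn_dist_le hK hA.isClosed hKA g hψ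
    hε.le fun x hx ↦ (hψg x hx).le
  exact ⟨g', ⟨⟨g', hg'g.trans hg⟩, fun x hx ↦ hg'ψ hx ▸ hψ0 x hx, rfl⟩, hg'ε⟩

theorem exists_continuousMap_eqOn_ne_zero_of_notMem [TopologicalSpace X] [ChartedSpace E X]
    [T2Space X] [SecondCountableTopology X] (hEV : finrank ℝ E < finrank ℝ V)
    {K : Set X} (hK : IsClosed K) (F : C(X, V)) :
    ∃ G : C(X, V), EqOn G F K ∧ ∀ x ∉ K, G x ≠ 0 := by
  have : LocallyCompactSpace X := ChartedSpace.locallyCompactSpace E X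
  have : CompleteSpace V := FiniteDimensional.complete ℝ V
  have : CompleteSpace {g : C(X, V) | EqOn g F K} :=
    (ContinuousMap.isComplete_setOfPred_eqOn F K).completeSpace_coe
  have : Nonempty {g : C(X, V) | EqOn g F K} := ⟨⟨F, eqOn_refl F K⟩⟩
  obtain ⟨𝒜, h𝒜, hcover, hcompact⟩ := exists_countable_isCompact_cover_of_isOpen E hK.isOpen_compl
  have hopen (A) (hA : A ∈ 𝒜) :
      IsOpen {g : {g : C(X, V) | EqOn g F K} | MapsTo g.1 A {0}ᶜ} :=
    (ContinuousMap.isOpen_setOfPred_mapsTo (hcompact A hA).1 isOpen_compl_singleton).preimage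
      continuous_subtype_val
  have hdense (A) (hA : A ∈ 𝒜) :
      Dense {g : {g : C(X, V) | EqOn g F K} | MapsTo g.1 A {0}ᶜ} := by
    obtain ⟨hAc, hAK, x, hAx⟩ := hcompact A hA
    exact dense_setOf_eqOn_ne_zero hK hAc (disjoint_compl_right.mono_right hAK) (chartAt E x) hAx
      hEV F
  obtain ⟨G, hG⟩ := (dense_biInter_of_isOpen hopen h𝒜 hdense).nonempty
  refine ⟨G.1, G.2, fun x hx ↦ ?_⟩
  obtain ⟨A, hA, hxA⟩ := hcover hx
  exact mem_iInter₂.1 hG A hA hxA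

end NonvanishingMaps

theorem exists_continuous_extension_ne_zero_general
    {E M H : Type*} [NormedAddCommGroup E] [NormedSpace ℝ E] [FiniteDimensional ℝ E]
    [TopologicalSpace M] [ChartedSpace E M] [T2Space M] [SecondCountableTopology M]
    [AddCommGroup H] [TopologicalSpace H] [IsTopologicalAddGroup H] [Module ℝ H]
    [ContinuousSMul ℝ H] [LocallyConvexSpace ℝ H] [T2Space H]
    (hdim : finrank ℝ E < Module.rank ℝ H)
    (K : Set M) (hK : IsClosed K) (f : M → H) (hf : ContinuousOn f K)
    (hf0 : ∀ x ∈ K, f x ≠ 0) :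
    ∃ g : M → H, Continuous g ∧ EqOn g f K ∧ ∀ x, g x ≠ 0 := by
  have : LocallyCompactSpace M := ChartedSpace.locallyCompactSpace E M
  have hrank : ((finrank ℝ E + 1 : ℕ) : Cardinal) ≤ Module.rank ℝ H := by
    exact_mod_cast Cardinal.natCast_add_one_le_iff.2 hdim
  obtain ⟨j, hj⟩ := le_rank_iff_exists_linearMap.1 hrank
  let i := j.toContinuousLinearMap
  obtain ⟨P, hP⟩ : i.HasLeftInverse := hasLeftInverse_of_injective hj
  obtain ⟨F, hF, hFf, -⟩ := exists_continuous_eqOn_forall_mem_convex hK hf convex_univ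
    univ_nonempty (mapsTo_univ _ _)
  obtain ⟨G, hGF, hG0⟩ := exists_continuousMap_eqOn_ne_zero_of_notMem (E := E) (by simp) hK
    ⟨fun x ↦ P (F x), P.continuous.comp hF⟩
  have hPg (x : M) : P (F x + i (G x - P (F x))) = G x := by
    rw [map_add, hP, add_sub_cancel]
  have hgf : EqOn (fun x ↦ F x + i (G x - P (F x))) f K := fun x hx ↦ by
    simp [hGF hx, hFf hx]
  refine ⟨fun x ↦ F x + i (G x - P (F x)), by fun_prop, hgf, fun x hx ↦ ?_⟩
  by_cases hxK : x ∈ K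
  · exact hf0 x hxK ((hgf hxK).symm.trans hx)
  · exact hG0 x hxK (by simpa only [hx, map_zero] using (hPg x).symm)

/-- Extension avoiding zero (Lemma on Hausdorff-dimension based extensions): if `M` is a
second-countable Hausdorff `C¹` manifold of dimension `d` without boundary, `K ⊆ M` is
closed, `H` is a real Hilbert space containing a subspace of dimension `d + 1`, and
`f : K → H` is continuous with `0 ∉ f(K)`, then `f` admits a continuous extension
`f̄ : M → H` with `0 ∉ f̄(M)`. -/
theorem exists_continuous_extension_ne_zero
    {d : ℕ} {M : Type*} [TopologicalSpace M]
    [ChartedSpace (EuclideanSpace ℝ (Fin d)) M]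
    [HasGroupoid M (contDiffGroupoid 1 (modelWithCornersSelf ℝ (EuclideanSpace ℝ (Fin d))))]
    [T2Space M] [SecondCountableTopology M]
    {H : Type*} [NormedAddCommGroup H] [InnerProductSpace ℝ H] [CompleteSpace H]
    (hdim : ∃ V : Submodule ℝ H, FiniteDimensional ℝ V ∧ Module.finrank ℝ V = d + 1)
    (K : Set M) (hK : IsClosed K) (f : M → H) (hf : ContinuousOn f K)
    (hf0 : ∀ x ∈ K, f x ≠ 0) :
    ∃ g : M → H, Continuous g ∧ Set.EqOn g f K ∧ ∀ x, g x ≠ 0 := by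
  obtain ⟨V, _, hV⟩ := hdim
  refine exists_continuous_extension_ne_zero_general (E := EuclideanSpace ℝ (Fin d)) ?_
    K hK f hf hf0
  calc (finrank ℝ (EuclideanSpace ℝ (Fin d)) : Cardinal) = d := by simp
    _ < (d + 1 : ℕ) := mod_cast d.lt_succ_self
    _ = Module.rank ℝ V := by rw [← hV, finrank_eq_rank]
    _ ≤ Module.rank ℝ H := V.rank_le
end

section
/- Let d ∈ ℕ, let M be a second-countable Hausdorff C¹ manifold without boundary of dimension d (modelled on ℝ^d), let K ⊆ M be a closed set, let H be a real Hilbert space, and let f : K → H be continuous. Then there exists a continuous extension f̄ : M → H with f̄ = f on K such that the restriction of f̄ to the open set M \ K is of class C¹. -/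
/-! Fix a metric on `M`. Around a point `x ∉ K` a single value of `f`, taken at a point of `K`
almost closest to `x`, is an admissible value for the extension at all points near `x`. A partition
of unity on `M \ K` of the same regularity as `M` glues these local constants, so that the value of
the extension at `x` is a convex combination of values of `f` at points of `K` within twice the
distance from `x` to `K`. As `x` tends to `k ∈ K`, these points tend to `k` as well, and local
convexity of the target yields continuity at `k`. -/

open Set Filter Metric TopologicalSpace
open scoped Topology Manifold ContDiff

section PartitionOfUnity

universe u

variable {E : Type*} [NormedAddCommGroup E] [NormedSpace ℝ E]
  {H : Type*} [TopologicalSpace H] {I : ModelWithCorners ℝ E H}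
  {M : Type u} [TopologicalSpace M] [ChartedSpace H M]

theorem contMDiff_bumpCovering_toPartitionOfUnity {n : ℕ∞ω} {ι : Type*} {s : Set M}
    (f : BumpCovering ι M s) (hf : ∀ i, ContMDiff I 𝓘(ℝ) n (f i)) (i : ι) :
    ContMDiff I 𝓘(ℝ) n (f.toPartitionOfUnity i) := by
  refine (hf i).mul (contMDiff_finprod_cond (fun j _ => contMDiff_const.sub (hf j)) ?_)
  simpa only [Function.mulSupport_one_sub] using f.locallyFinite

variable [FiniteDimensional ℝ E] [T2Space M] {n : ℕ∞}

theorem contMDiff_smoothBumpFunction [IsManifold I n M] {c : M} (f : SmoothBumpFunction I c) :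
    ContMDiff I 𝓘(ℝ) n f := by
  refine contMDiff_of_tsupport fun x hx => ?_
  have hxc : x ∈ (chartAt H c).source := f.tsupport_subset_chartAt_source hx
  exact (f.contDiffAt.contMDiffAt.comp x (contMDiffAt_extChartAt' hxc)).congr_of_eventuallyEq
    (f.eventuallyEq_of_mem_source hxc)

variable [SigmaCompactSpace M]

variable (I n) in
theorem exists_partitionOfUnity_contMDiff_isSubordinate [IsManifold I n M] {s : Set M}
    (hs : IsClosed s) {U : M → Set M} (hU : ∀ x ∈ s, U x ∈ 𝓝 x) :
    ∃ (ι : Type u) (c : ι → M) (ρ : PartitionOfUnity ι M s),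
      (∀ i, ContMDiff I 𝓘(ℝ) n (ρ i)) ∧ ρ.IsSubordinate (U ∘ c) := by
  obtain ⟨ι, b, hbU⟩ := SmoothBumpCovering.exists_isSubordinate I hs hU
  have hb (i : ι) : ContMDiff I 𝓘(ℝ) n (b i) := contMDiff_smoothBumpFunction (b i)
  let f : BumpCovering ι M s :=
    { toFun i := ⟨b i, (hb i).continuous⟩
      locallyFinite' := b.locallyFinite
      nonneg' i _ := (b i).nonneg
      le_one' i _ := (b i).le_one
      eventuallyEq_one' := b.eventuallyEq_one' }
  have hfU : f.IsSubordinate (U ∘ b.c) := hbU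
  exact ⟨ι, b.c, f.toPartitionOfUnity, contMDiff_bumpCovering_toPartitionOfUnity f hb,
    hfU.toPartitionOfUnity⟩

variable {F : Type*} [NormedAddCommGroup F] [NormedSpace ℝ F] {t : M → Set F}

variable (I n) in
theorem exists_contMDiff_forall_mem_convex_of_local_const [IsManifold I n M]
    (ht : ∀ x, Convex ℝ (t x)) (hloc : ∀ x, ∃ a, ∀ᶠ y in 𝓝 x, a ∈ t y) :
    ∃ g : M → F, ContMDiff I 𝓘(ℝ, F) n g ∧ ∀ x, g x ∈ t x := by
  choose a ha using hloc
  obtain ⟨ι, c, ρ, hρ, hρa⟩ := exists_partitionOfUnity_contMDiff_isSubordinate I n isClosed_univ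
    (U := fun x => {y | a x ∈ t y}) fun x _ => ha x
  refine ⟨fun x => ∑ᶠ i, ρ i x • a (c i), ?_, fun x => ?_⟩
  · exact contMDiff_finsum (fun i => (hρ i).smul contMDiff_const)
      (ρ.locallyFinite.subset fun _ => Function.support_smul_subset_left _ _)
  · exact ρ.finsum_smul_mem_convex (g := fun i _ => a (c i)) (mem_univ x)
      (fun i hi => hρa i (subset_tsupport (ρ i) hi)) (ht x)

variable (I n) in
theorem exists_contMDiffOn_forall_mem_convex_of_local_const [IsManifold I n M] {U : Set M}
    (hU : IsOpen U) (ht : ∀ x ∈ U, Convex ℝ (t x))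
    (hloc : ∀ x ∈ U, ∃ a, ∀ᶠ y in 𝓝 x, a ∈ t y) :
    ∃ g : M → F, ContMDiffOn I 𝓘(ℝ, F) n g U ∧ ∀ x ∈ U, g x ∈ t x := by
  have := I.locallyCompactSpace
  have := I.secondCountableTopology
  have := ChartedSpace.locallyCompactSpace H M
  have := ChartedSpace.secondCountable_of_sigmaCompact H M
  lift U to Opens M using hU
  have : LocallyCompactSpace U := U.isOpen.locallyCompactSpace
  obtain ⟨g, hg, hgt⟩ := exists_contMDiff_forall_mem_convex_of_local_const I n
    (t := fun x : U => t x) (fun x => ht x x.2) fun x =>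
      (hloc x x.2).imp fun _ ha => continuous_subtype_val.continuousAt.eventually ha
  have hext (x : U) : Function.extend Subtype.val g 0 (x : M) = g x :=
    Subtype.val_injective.extend_apply g 0 x
  refine ⟨Function.extend Subtype.val g 0, fun x hx => ?_, fun x hx => ?_⟩
  · refine (contMDiffAt_subtype_iff (x := ⟨x, hx⟩).1 ?_).contMDiffWithinAt
    simpa only [hext] using hg.contMDiffAt
  · simpa only [hext ⟨x, hx⟩] using hgt ⟨x, hx⟩

end PartitionOfUnity

section NearbyHull

variable {X : Type*} [PseudoMetricSpace X] {F : Type*} [AddCommGroup F] [Module ℝ F]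

/-- The convex hull of the values of `f` at the points of `K` almost closest to `x`: those within
twice the distance from `x` to `K`. It consists of the admissible values at `x` for an extension
of `f` from `K`. The ball is closed so that the hull contains `f x` when `x ∈ K`. -/
def nearbyHull (f : X → F) (K : Set X) (x : X) : Set F :=
  convexHull ℝ (f '' (K ∩ closedBall x (2 * infDist x K)))

variable {f : X → F} {K : Set X} {x : X}

theorem self_mem_nearbyHull (hx : x ∈ K) : f x ∈ nearbyHull f K x :=
  subset_convexHull ℝ _ <| mem_image_of_mem f
    ⟨hx, mem_closedBall_self (mul_nonneg zero_le_two infDist_nonneg)⟩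

theorem exists_eventually_mem_nearbyHull (hK : K.Nonempty) (hx : x ∉ closure K) :
    ∃ a, ∀ᶠ y in 𝓝 x, a ∈ nearbyHull f K y := by
  have hpos : 0 < infDist x K := (infDist_pos_iff_notMem_closure hK).1 hx
  obtain ⟨k, hk, hxk⟩ : ∃ k ∈ K, dist x k < 2 * infDist x K :=
    (infDist_lt_iff hK).1 (by linarith)
  have hnear : ∀ᶠ y in 𝓝 x, dist y k < 2 * infDist y K :=
    (continuous_id.dist continuous_const).continuousAt.eventually_lt
      ((continuous_infDist_pt K).const_mul 2).continuousAt hxk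
  exact ⟨f k, hnear.mono fun y hy =>
    subset_convexHull ℝ _ (mem_image_of_mem f ⟨hk, mem_closedBall'.2 hy.le⟩)⟩

theorem closedBall_two_mul_infDist_subset {k : X} (hk : k ∈ K) (y : X) :
    closedBall y (2 * infDist y K) ⊆ closedBall k (3 * dist y k) :=
  closedBall_subset_closedBall' <| by linarith [infDist_le_dist_of_mem (x := y) hk]

theorem tendsto_of_eventually_mem_nearbyHull [TopologicalSpace F] [LocallyConvexSpace ℝ F]
    {g : X → F} {k : X} (hk : k ∈ K) (hf : ContinuousWithinAt f K k)
    (hg : ∀ᶠ y in 𝓝 k, g y ∈ nearbyHull f K y) : Tendsto g (𝓝 k) (𝓝 (f k)) := by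
  refine (LocallyConvexSpace.convex_basis (𝕜 := ℝ) (f k)).tendsto_right_iff.2
    fun V ⟨hV, hVconvex⟩ => ?_
  obtain ⟨δ, hδ, hδV⟩ := mem_nhdsWithin_iff.1 (hf hV)
  filter_upwards [hg, ball_mem_nhds k (show 0 < δ / 3 by positivity)] with y hgy hy
  have hball : closedBall y (2 * infDist y K) ⊆ ball k δ :=
    (closedBall_two_mul_infDist_subset hk y).trans <|
      closedBall_subset_ball (by linarith [mem_ball.1 hy])
  have himage : f '' (K ∩ closedBall y (2 * infDist y K)) ⊆ V :=
    image_subset_iff.2 fun z hz => hδV ⟨hball hz.2, hz.1⟩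
  exact convexHull_min himage hVconvex hgy

end NearbyHull

theorem exists_continuous_extension_contMDiffOn_compl_general
    {E : Type*} [NormedAddCommGroup E] [NormedSpace ℝ E] [FiniteDimensional ℝ E]
    {H : Type*} [TopologicalSpace H] (I : ModelWithCorners ℝ E H)
    {M : Type*} [TopologicalSpace M] [ChartedSpace H M] (n : ℕ∞) [IsManifold I n M]
    [T2Space M] [SigmaCompactSpace M]
    {F : Type*} [NormedAddCommGroup F] [NormedSpace ℝ F]
    {K : Set M} (hK : IsClosed K) {f : M → F} (hf : ContinuousOn f K) :
    ∃ g : M → F, Continuous g ∧ EqOn g f K ∧ ContMDiffOn I 𝓘(ℝ, F) n g Kᶜ := by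
  classical
  obtain rfl | hne := K.eq_empty_or_nonempty
  · exact ⟨0, continuous_const, eqOn_empty _ _, contMDiffOn_const⟩
  have := Manifold.metrizableSpace I M
  let := metrizableSpaceMetric M
  obtain ⟨g, hg, hgf⟩ := exists_contMDiffOn_forall_mem_convex_of_local_const I n
    (t := nearbyHull f K) hK.isOpen_compl (fun _ _ => convex_convexHull ℝ _)
    fun _ hx => exists_eventually_mem_nearbyHull hne (hK.closure_eq.symm ▸ hx)
  have hmem (x : M) : K.piecewise f g x ∈ nearbyHull f K x := by
    by_cases hx : x ∈ K
    · simpa only [piecewise_eq_of_mem _ _ _ hx] using self_mem_nearbyHull hx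
    · simpa only [piecewise_eq_of_notMem _ _ _ hx] using hgf x hx
  have hdiff : ContMDiffOn I 𝓘(ℝ, F) n (K.piecewise f g) Kᶜ :=
    hg.congr (K.piecewise_eqOn_compl f g)
  refine ⟨K.piecewise f g, continuous_iff_continuousAt.2 fun x => ?_, K.piecewise_eqOn f g, hdiff⟩
  by_cases hx : x ∈ K
  · exact continuousAt_of_tendsto_nhds
      (tendsto_of_eventually_mem_nearbyHull hx (hf x hx) (.of_forall hmem))
  · exact hdiff.continuousOn.continuousAt (hK.isOpen_compl.mem_nhds hx)

/-- Dugundji-type extension with interior regularity: if `M` is a second-countable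
Hausdorff `C¹` manifold of dimension `d` without boundary, `K ⊆ M` is closed, `H` is a
real Hilbert space and `f : K → H` is continuous, then `f` admits a continuous extension
`f̄ : M → H` whose restriction to the open set `M \ K` is of class `C¹`. -/
theorem exists_continuous_extension_contMDiffOn_compl
    {d : ℕ} {M : Type*} [TopologicalSpace M]
    [ChartedSpace (EuclideanSpace ℝ (Fin d)) M]
    [HasGroupoid M (contDiffGroupoid 1 (modelWithCornersSelf ℝ (EuclideanSpace ℝ (Fin d))))]
    [T2Space M] [SecondCountableTopology M]
    {H : Type*} [NormedAddCommGroup H] [InnerProductSpace ℝ H] [CompleteSpace H]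
    (K : Set M) (hK : IsClosed K) (f : M → H) (hf : ContinuousOn f K) :
    ∃ g : M → H, Continuous g ∧ Set.EqOn g f K ∧
      ContMDiffOn (modelWithCornersSelf ℝ (EuclideanSpace ℝ (Fin d)))
        (modelWithCornersSelf ℝ H) 1 g Kᶜ := by
  have : IsManifold 𝓘(ℝ, EuclideanSpace ℝ (Fin d)) 1 M := .mk' _ _ _
  have : LocallyCompactSpace M := ChartedSpace.locallyCompactSpace (EuclideanSpace ℝ (Fin d)) M
  exact exists_continuous_extension_contMDiffOn_compl_general _ 1 hK hf
end

section
/- (Lower semicontinuity of the Morse index.) Let H be a real Hilbert space, T a bounded self-adjoint operator on H, and n ∈ ℕ with n ≤ Ind(T). Then there exists δ > 0 such that every bounded self-adjoint operator S on H with ‖S − T‖ < δ satisfies Ind(S) ≥ n. -/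
open RealInnerProductSpace

/-- The Morse index of a bounded self-adjoint operator `T` on a real Hilbert space: the
supremum (in `ℕ∞`) of the dimensions of subspaces on which the quadratic form
`v ↦ ⟪T v, v⟫` is negative definite. -/
noncomputable def morseIndex {H : Type*} [NormedAddCommGroup H] [InnerProductSpace ℝ H]
    (T : H →L[ℝ] H) : ℕ∞ :=
  ⨆ (V : Submodule ℝ H) (_ : ∀ v ∈ V, v ≠ 0 → ⟪T v, v⟫ < (0:ℝ)),
    Cardinal.toENat (Module.rank ℝ V)

/-!
If `T` is negative definite on an `n`-dimensional subspace `W`, then `⟪T v, v⟫ < 0` on the unit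
sphere of `W`. That sphere is compact, so the inequality survives every small perturbation of `T`
in operator norm, with the same `W`.
-/

open Module Topology

theorem natCast_le_iSup_iff {ι : Sort*} [Nonempty ι] {f : ι → ℕ∞} {n : ℕ} :
    (n : ℕ∞) ≤ ⨆ i, f i ↔ ∃ i, (n : ℕ∞) ≤ f i := by
  cases n with
  | zero => simp
  | succ m =>
    push_cast
    simp only [ENat.add_one_le_iff (ENat.natCast_ne_top m), lt_iSup_iff]

theorem exists_submodule_le_finrank_eq_of_natCast_le_rank {R M : Type*} [Ring R]
    [StrongRankCondition R] [AddCommGroup M] [Module R M] {V : Submodule R M} {n : ℕ}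
    (h : (n : Cardinal) ≤ Module.rank R V) :
    ∃ W ≤ V, Module.Finite R W ∧ finrank R W = n := by
  have := nontrivial_of_invariantBasisNumber R
  obtain ⟨v, hv⟩ := le_rank_iff.mp h
  have hv' : LinearIndependent R fun i => (v i : M) := hv.map' V.subtype V.ker_subtype
  refine ⟨Submodule.span R (Set.range fun i => (v i : M)), ?_, ?_, ?_⟩
  · exact Submodule.span_le.mpr (Set.range_subset_iff.mpr fun i => (v i).2)
  · exact Module.Finite.span_of_finite R (Set.finite_range _)
  · simpa using finrank_span_eq_card hv'

section NegativeDefinite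

variable {H : Type*} [NormedAddCommGroup H] [InnerProductSpace ℝ H]

/-- The quadratic form `v ↦ ⟪T v, v⟫` is negative definite on the subspace `V`: the condition on
`V` in the supremum defining `morseIndex T`. -/
def IsNegDefOn (T : H →L[ℝ] H) (V : Submodule ℝ H) : Prop :=
  ∀ v ∈ V, v ≠ 0 → ⟪T v, v⟫ < (0 : ℝ)

variable {T : H →L[ℝ] H} {V W : Submodule ℝ H}

theorem IsNegDefOn.mono (hV : IsNegDefOn T V) (h : W ≤ V) : IsNegDefOn T W :=
  fun v hv => hV v (h hv)

theorem isNegDefOn_bot (T : H →L[ℝ] H) : IsNegDefOn T ⊥ :=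
  fun _ hv hv0 => absurd ((Submodule.mem_bot ℝ).mp hv) hv0

theorem isNegDefOn_iff_forall_mem_unitSphere :
    IsNegDefOn T W ↔ ∀ w ∈ Metric.sphere (0 : W) 1, ⟪T (w : H), (w : H)⟫ < (0 : ℝ) := by
  refine ⟨fun hW w hw => hW w w.2 ?_, fun h v hv hv0 => ?_⟩
  · simpa using ne_zero_of_mem_unit_sphere ⟨w, hw⟩
  · have hpos : 0 < ‖v‖⁻¹ := by positivity
    have hmem : ‖v‖⁻¹ • (⟨v, hv⟩ : W) ∈ Metric.sphere (0 : W) 1 := by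
      simp [norm_smul, hv0]
    simpa only [Submodule.coe_smul, map_smul, real_inner_smul_left, real_inner_smul_right,
      ← smul_eq_mul, smul_neg_iff_of_pos_left hpos] using h _ hmem

theorem isOpen_setOfPred_isNegDefOn (W : Submodule ℝ H) [FiniteDimensional ℝ W] :
    IsOpen {T : H →L[ℝ] H | IsNegDefOn T W} := by
  simp only [isOpen_iff_eventually, Set.mem_ofPred_eq, isNegDefOn_iff_forall_mem_unitSphere]
  intro T hT
  refine (isCompact_sphere (0 : W) 1).eventually_forall_of_forall_eventually fun w hw => ?_
  have hcont : Continuous fun p : (H →L[ℝ] H) × W => ⟪p.1 (p.2 : H), (p.2 : H)⟫ := by fun_prop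
  exact hcont.continuousAt.eventually_lt_const (hT w hw)

theorem natCast_le_morseIndex_iff {n : ℕ} :
    (n : ℕ∞) ≤ morseIndex T ↔
      ∃ W : Submodule ℝ H, FiniteDimensional ℝ W ∧ finrank ℝ W = n ∧ IsNegDefOn T W := by
  have : Nonempty {V : Submodule ℝ H // IsNegDefOn T V} := ⟨⟨⊥, isNegDefOn_bot T⟩⟩
  have hiSup : morseIndex T =
      ⨆ V : {V : Submodule ℝ H // IsNegDefOn T V}, Cardinal.toENat (Module.rank ℝ V.1) :=
    iSup_subtype'
  simp only [hiSup, natCast_le_iSup_iff, Cardinal.natCast_le_toENat]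
  constructor
  · rintro ⟨⟨V, hV⟩, hn⟩
    obtain ⟨W, hWV, hfin, hrank⟩ := exists_submodule_le_finrank_eq_of_natCast_le_rank hn
    exact ⟨W, hfin, hrank, hV.mono hWV⟩
  · rintro ⟨W, _, rfl, hW⟩
    exact ⟨⟨W, hW⟩, (finrank_eq_rank ℝ W).le⟩

theorem morseIndex_lower_semicontinuous_general (T : H →L[ℝ] H) (n : ℕ)
    (hn : (n : ℕ∞) ≤ morseIndex T) : ∀ᶠ S in 𝓝 T, (n : ℕ∞) ≤ morseIndex S := by
  obtain ⟨W, hfin, hrank, hT⟩ := natCast_le_morseIndex_iff.mp hn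
  filter_upwards [(isOpen_setOfPred_isNegDefOn W).mem_nhds hT] with S hS
  exact natCast_le_morseIndex_iff.mpr ⟨W, hfin, hrank, hS⟩

end NegativeDefinite

/-- Lower semicontinuity of the Morse index: if `T` is a bounded self-adjoint operator on
a real Hilbert space and `n ≤ Ind(T)`, then there is `δ > 0` such that every bounded
self-adjoint operator `S` with `‖S - T‖ < δ` satisfies `Ind(S) ≥ n`. -/
theorem morseIndex_lower_semicontinuous
    {H : Type*} [NormedAddCommGroup H] [InnerProductSpace ℝ H] [CompleteSpace H]
    (T : H →L[ℝ] H) (hT : ∀ x y : H, ⟪T x, y⟫ = ⟪x, T y⟫)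
    (n : ℕ) (hn : (n : ℕ∞) ≤ morseIndex T) :
    ∃ δ > (0:ℝ), ∀ S : H →L[ℝ] H, (∀ x y : H, ⟪S x, y⟫ = ⟪x, S y⟫) →
      ‖S - T‖ < δ → (n : ℕ∞) ≤ morseIndex S := by
  obtain ⟨δ, hδ, hball⟩ :=
    Metric.eventually_nhds_iff.mp (morseIndex_lower_semicontinuous_general T n hn)
  exact ⟨δ, hδ, fun S _ hS => hball (by rwa [dist_eq_norm])⟩
end
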